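/- The subgroup G_{V'} of GL(5,ℝ) generated by the four Minkowski reflections r_{i₀}, r_{i₁}, r_{i₂}, r_b is isomorphic to the symmetric group S₅; in particular it is finite of order 120. -/

import Mathlib

noncomputable section

open Real

/-- The Minkowski bilinear form of signature (1,4) on `ℝ^5`. -/
def B (x y : Fin 5 → ℝ) : ℝ :=
  -(x 0 * y 0) + x 1 * y 1 + x 2 * y 2 + x 3 * y 3 + x 4 * y 4

/-- The Kerckhoff–Storm vector `t`. -/
def vt : Fin 5 → ℝ := ![Real.sqrt 2, 1, 1, 1, Real.sqrt 7]
/-- The Kerckhoff–Storm vector `b`. -/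
def vb : Fin 5 → ℝ := ![Real.sqrt 2, 1, 1, -1, -Real.sqrt 7]
/-- The Kerckhoff–Storm vector `u`. -/
def vu : Fin 5 → ℝ := ![Real.sqrt 2, 1, 1, 1, -(Real.sqrt 7 / 7)]
/-- The Kerckhoff–Storm vector `ℓ`. -/
def vl : Fin 5 → ℝ := ![Real.sqrt 2, 1, 1, -1, Real.sqrt 7 / 7]
/-- The Kerckhoff–Storm vector `c`. -/
def vc : Fin 5 → ℝ := ![1, Real.sqrt 2, 0, 0, 0]
/-- The Kerckhoff–Storm vector `i₀`. -/
def vi0 : Fin 5 → ℝ := ![0, -1, 1, 0, 0]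
/-- The Kerckhoff–Storm vector `i₁`. -/
def vi1 : Fin 5 → ℝ := ![0, 0, -1, -1, 0]
/-- The Kerckhoff–Storm vector `i₂`. -/
def vi2 : Fin 5 → ℝ := ![0, 0, -1, 1, 0]

/-- The Minkowski reflection along a vector `v` with `B v v ≠ 0`. -/
def mrefl (v : Fin 5 → ℝ) (x : Fin 5 → ℝ) : Fin 5 → ℝ :=
  x - (2 * (B x v / B v v)) • v

/-!
The vectors `i₁`, `i₀`, `i₂`, `b` are, up to scale, the consecutive differences of five vectors
`p₀, …, p₄` of Minkowski norm `-2` with pairwise products `-3`: the vertices of a regular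
hyperbolic simplex. Reflecting in `pᵢ - pⱼ` interchanges `pᵢ` and `pⱼ` and fixes the other vertices,
and the `pᵢ` form a basis, so the group is a faithful copy of the group generated by the
transpositions of consecutive indices, which is the full symmetric group.
-/

section PermutationRepresentation

open Module

variable {ι R M : Type*} [CommSemiring R] [AddCommMonoid M] [Module R M]

/-- The representation of `Equiv.Perm ι` by invertible linear maps permuting the vectors of a
basis indexed by `ι`. -/
def basisPermRep (p : Basis ι R M) : Equiv.Perm ι →* (M →ₗ[R] M)ˣ :=
  (LinearMap.GeneralLinearGroup.generalLinearEquiv R M).symm.toMonoidHom.comp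
    { toFun := fun σ => p.equiv p σ
      map_one' := p.equiv_refl
      map_mul' := fun σ τ => (p.equiv_trans p p τ σ).symm }

theorem basisPermRep_apply_self (p : Basis ι R M) (σ : Equiv.Perm ι) (i : ι) :
    (basisPermRep p σ).val (p i) = p (σ i) :=
  p.equiv_apply i p σ

theorem basisPermRep_injective [Nontrivial R] (p : Basis ι R M) :
    Function.Injective (basisPermRep p) := fun σ τ h =>
  Equiv.ext fun i => p.injective <| by
    rw [← basisPermRep_apply_self, h, basisPermRep_apply_self]

theorem basisPermRep_eq_of_apply_self {p : Basis ι R M} {σ : Equiv.Perm ι} {g : (M →ₗ[R] M)ˣ}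
    (h : ∀ i, g.val (p i) = p (σ i)) : basisPermRep p σ = g :=
  Units.ext <| p.ext fun i => (basisPermRep_apply_self p σ i).trans (h i).symm

end PermutationRepresentation

theorem closure_swap_castSucc_succ (n : ℕ) :
    Subgroup.closure (Set.range fun i : Fin n => Equiv.swap i.castSucc i.succ) = ⊤ :=
  eq_top_iff.mpr fun σ _ => Subgroup.le_closure_toSubmonoid _ <| by
    rw [Equiv.Perm.mclosure_swap_castSucc_succ]
    exact Submonoid.mem_top σ

section RegularSimplex

open Module

variable {ι K V : Type*} [Field K] [AddCommGroup V] [Module K V]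

/-- The reflection along `v` with respect to the bilinear form `Φ`. It is the identity when
`Φ v v = 0`, by the convention for division by zero. -/
def formReflection (Φ : LinearMap.BilinForm K V) (v x : V) : V :=
  x - (2 * (Φ x v / Φ v v)) • v

theorem formReflection_smul (Φ : LinearMap.BilinForm K V) {c : K} (hc : c ≠ 0) (v : V) :
    formReflection Φ (c • v) = formReflection Φ v := by
  funext x
  have hcoeff : 2 * (c * Φ x v / (c * (c * Φ v v))) * c = 2 * (Φ x v / Φ v v) := by
    field_simp
  simp only [formReflection, map_smul, LinearMap.smul_apply, smul_eq_mul, smul_smul, hcoeff]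

variable [DecidableEq ι]

/-- The vectors `p i` are the vertices of a regular simplex for the bilinear form `Φ`: their Gram
matrix has all diagonal entries equal to `a` and all other entries equal to `b`. -/
def IsRegularSimplex (Φ : LinearMap.BilinForm K V) (p : ι → V) (a b : K) : Prop :=
  ∀ i j, Φ (p i) (p j) = if i = j then a else b

namespace IsRegularSimplex

variable {Φ : LinearMap.BilinForm K V} {a b : K}

theorem linearIndependent [Fintype ι] {p : ι → V} (hp : IsRegularSimplex Φ p a b) (hab : a ≠ b)
    (hsum : a + (Fintype.card ι - 1) * b ≠ 0) : LinearIndependent K p := by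
  rw [Fintype.linearIndependent_iff]
  intro c hc
  have hrow (j : ι) : (a - b) * c j + b * ∑ i, c i = 0 := by
    calc (a - b) * c j + b * ∑ i, c i
        = ∑ i, c i * (b + if i = j then a - b else 0) := by
          simp only [mul_add, Finset.sum_add_distrib, ← Finset.sum_mul, mul_ite, mul_zero,
            Finset.sum_ite_eq', Finset.mem_univ, if_true]
          ring
      _ = ∑ i, c i * Φ (p i) (p j) :=
          Finset.sum_congr rfl fun i _ => by rw [hp]; split_ifs <;> ring
      _ = Φ (∑ i, c i • p i) (p j) := by simp
      _ = 0 := by simp [hc]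
  have htotal : ∑ i, c i = 0 := by
    have : (a + (Fintype.card ι - 1) * b) * ∑ i, c i = 0 := by
      calc (a + (Fintype.card ι - 1) * b) * ∑ i, c i
          = ∑ j, ((a - b) * c j + b * ∑ i, c i) := by
            simp only [Finset.sum_add_distrib, ← Finset.mul_sum, Finset.sum_const,
              Finset.card_univ, nsmul_eq_mul]
            ring
        _ = 0 := Finset.sum_eq_zero fun j _ => hrow j
    exact (mul_eq_zero.mp this).resolve_left hsum
  intro j
  simpa [htotal, sub_ne_zero.mpr hab] using hrow j

variable [NeZero (2 : K)]

theorem formReflection_sub {p : ι → V} (hp : IsRegularSimplex Φ p a b) (hab : a ≠ b) {i j : ι}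
    (hij : i ≠ j) (k : ι) :
    formReflection Φ (p i - p j) (p k) = p (Equiv.swap i j k) := by
  have hne : a - b ≠ 0 := sub_ne_zero.mpr hab
  have hnorm : Φ (p i - p j) (p i - p j) = 2 * (a - b) := by
    simp only [map_sub, LinearMap.sub_apply, hp _ _, if_true, if_neg hij, if_neg hij.symm]
    ring
  have hprod : Φ (p k) (p i - p j) = (if k = i then a else b) - if k = j then a else b := by
    rw [map_sub, hp, hp]
  rw [formReflection, hnorm, hprod]
  rcases eq_or_ne k i with rfl | hki
  · have : 2 * ((a - b) / (2 * (a - b))) = 1 := by field_simp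
    simp [hij, this]
  rcases eq_or_ne k j with rfl | hkj
  · have : 2 * ((b - a) / (2 * (a - b))) = -1 := by field_simp; ring
    simp [hki, this]
  · simp [hki, hkj, Equiv.swap_apply_of_ne_of_ne hki hkj]

variable {n : ℕ} {p : Basis (Fin (n + 1)) K V} {g : Fin n → (V →ₗ[K] V)ˣ}

theorem range_basisPermRep_eq_closure (hp : IsRegularSimplex Φ p a b) (hab : a ≠ b)
    (hg : ∀ i x, (g i).val x = formReflection Φ (p i.castSucc - p i.succ) x) :
    (basisPermRep p).range = Subgroup.closure (Set.range g) := by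
  have hswap (i : Fin n) : basisPermRep p (Equiv.swap i.castSucc i.succ) = g i :=
    basisPermRep_eq_of_apply_self fun k => by
      rw [hg, hp.formReflection_sub hab i.castSucc_lt_succ.ne]
  rw [MonoidHom.range_eq_map, ← closure_swap_castSucc_succ, MonoidHom.map_closure,
    ← Set.range_comp]
  exact congrArg (fun s => Subgroup.closure (Set.range s)) (funext hswap)

theorem nonempty_closure_mulEquiv_perm (hp : IsRegularSimplex Φ p a b) (hab : a ≠ b)
    (hg : ∀ i x, (g i).val x = formReflection Φ (p i.castSucc - p i.succ) x) :
    Nonempty (Subgroup.closure (Set.range g) ≃* Equiv.Perm (Fin (n + 1))) :=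
  ⟨(MulEquiv.subgroupCongr (hp.range_basisPermRep_eq_closure hab hg).symm).trans
    (MonoidHom.ofInjective (basisPermRep_injective p)).symm⟩

end IsRegularSimplex

end RegularSimplex

/-- `B` as an element of Mathlib's type of bilinear forms. -/
def minkowskiForm : LinearMap.BilinForm ℝ (Fin 5 → ℝ) :=
  LinearMap.mk₂ ℝ B
    (fun x y z => by simp only [B, Pi.add_apply]; ring)
    (fun c x y => by simp only [B, Pi.smul_apply, smul_eq_mul]; ring)
    (fun x y z => by simp only [B, Pi.add_apply]; ring)
    (fun c x y => by simp only [B, Pi.smul_apply, smul_eq_mul]; ring)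

theorem mrefl_eq_formReflection (v : Fin 5 → ℝ) : mrefl v = formReflection minkowskiForm v := rfl

/-- The vertices of a regular simplex in the hyperboloid `B x x = -2`, numbered so that the
vectors `i₁`, `i₀`, `i₂`, `b` point along its consecutive edges. -/
def simplexVertex : Fin 5 → Fin 5 → ℝ :=
  ![![3 / 2 * √2, -1 / 2, -1 / 2, -1 / 2, -(√7 / 2)],
    ![3 / 2 * √2, -1 / 2, 1 / 2, 1 / 2, -(√7 / 2)],
    ![3 / 2 * √2, 1 / 2, -1 / 2, 1 / 2, -(√7 / 2)],
    ![3 / 2 * √2, 1 / 2, 1 / 2, -1 / 2, -(√7 / 2)],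
    ![√2, 0, 0, 0, 0]]

theorem isRegularSimplex_simplexVertex :
    IsRegularSimplex minkowskiForm simplexVertex (-2) (-3) := by
  have h2 : √2 * √2 = 2 := Real.mul_self_sqrt zero_le_two
  have h7 : √7 * √7 = 7 := Real.mul_self_sqrt (by norm_num)
  intro i j
  change B _ _ = _
  fin_cases i <;> fin_cases j <;> simp [B, simplexVertex] <;> linarith

theorem linearIndependent_simplexVertex : LinearIndependent ℝ simplexVertex :=
  isRegularSimplex_simplexVertex.linearIndependent (by norm_num) (by norm_num)

/-- `simplexVertex` as a basis. -/
def simplexBasis : Module.Basis (Fin 5) ℝ (Fin 5 → ℝ) :=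
  basisOfLinearIndependentOfCardEqFinrank linearIndependent_simplexVertex (by simp)

theorem coe_simplexBasis : ⇑simplexBasis = simplexVertex :=
  coe_basisOfLinearIndependentOfCardEqFinrank _ _

theorem isRegularSimplex_simplexBasis :
    IsRegularSimplex minkowskiForm simplexBasis (-2) (-3) :=
  coe_simplexBasis ▸ isRegularSimplex_simplexVertex

theorem mrefl_vi1 :
    mrefl vi1 = formReflection minkowskiForm (simplexVertex 0 - simplexVertex 1) := by
  have hedge : vi1 = simplexVertex 0 - simplexVertex 1 := by
    ext k
    fin_cases k <;> simp [vi1, simplexVertex] <;> norm_num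
  rw [mrefl_eq_formReflection, hedge]

theorem mrefl_vi0 :
    mrefl vi0 = formReflection minkowskiForm (simplexVertex 1 - simplexVertex 2) := by
  have hedge : vi0 = simplexVertex 1 - simplexVertex 2 := by
    ext k
    fin_cases k <;> simp [vi0, simplexVertex] <;> norm_num
  rw [mrefl_eq_formReflection, hedge]

theorem mrefl_vi2 :
    mrefl vi2 = formReflection minkowskiForm (simplexVertex 2 - simplexVertex 3) := by
  have hedge : vi2 = simplexVertex 2 - simplexVertex 3 := by
    ext k
    fin_cases k <;> simp [vi2, simplexVertex] <;> norm_num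
  rw [mrefl_eq_formReflection, hedge]

theorem mrefl_vb :
    mrefl vb = formReflection minkowskiForm (simplexVertex 3 - simplexVertex 4) := by
  have hedge : vb = (2 : ℝ) • (simplexVertex 3 - simplexVertex 4) := by
    ext k
    fin_cases k <;> simp [vb, simplexVertex] <;> ring
  rw [mrefl_eq_formReflection, hedge, formReflection_smul _ two_ne_zero]

/-- The subgroup of `GL(5,ℝ)` generated by the Minkowski reflections
`r_{i₀}, r_{i₁}, r_{i₂}, r_b` is isomorphic to the symmetric group `S₅`;
in particular it is finite of order 120. -/
theorem subgroup_GV'_iso_S5 (g₀ g₁ g₂ gb : ((Fin 5 → ℝ) →ₗ[ℝ] (Fin 5 → ℝ))ˣ)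
    (h₀ : ∀ x, g₀.val x = mrefl vi0 x)
    (h₁ : ∀ x, g₁.val x = mrefl vi1 x)
    (h₂ : ∀ x, g₂.val x = mrefl vi2 x)
    (hb : ∀ x, gb.val x = mrefl vb x) :
    Nonempty ((Subgroup.closure {g₀, g₁, g₂, gb} :
        Subgroup ((Fin 5 → ℝ) →ₗ[ℝ] (Fin 5 → ℝ))ˣ) ≃* Equiv.Perm (Fin 5)) ∧
      Nat.card (Subgroup.closure {g₀, g₁, g₂, gb} :
        Subgroup ((Fin 5 → ℝ) →ₗ[ℝ] (Fin 5 → ℝ))ˣ) = 120 := by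
  have hgens : ({g₀, g₁, g₂, gb} : Set ((Fin 5 → ℝ) →ₗ[ℝ] (Fin 5 → ℝ))ˣ) =
      Set.range ![g₁, g₀, g₂, gb] := by
    simp only [Matrix.range_cons, Matrix.range_empty, Set.union_empty, Set.singleton_union,
      Set.insert_comm]
  have hedges (i : Fin 4) (x : Fin 5 → ℝ) : (![g₁, g₀, g₂, gb] i).val x =
      formReflection minkowskiForm (simplexBasis i.castSucc - simplexBasis i.succ) x := by
    rw [coe_simplexBasis]
    fin_cases i
    exacts [(h₁ x).trans (congrFun mrefl_vi1 x), (h₀ x).trans (congrFun mrefl_vi0 x),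
      (h₂ x).trans (congrFun mrefl_vi2 x), (hb x).trans (congrFun mrefl_vb x)]
  rw [hgens]
  obtain ⟨e⟩ := isRegularSimplex_simplexBasis.nonempty_closure_mulEquiv_perm (by norm_num) hedges
  refine ⟨⟨e⟩, ?_⟩
  rw [Nat.card_congr e.toEquiv, Nat.card_perm, Nat.card_fin]
  rfl
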